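/- arXiv:2410.07729 — 2 statements merged into one kernel-verified Lean document; each statement's English description precedes it below -/
import Mathlib

section
/- Let n ≥ 2 be an integer and c a nonzero real number, with n odd or (n even and c < 0). Then the function f : ℂ → ℂ defined by f(x) = ∫₀^∞ e^{-(-c)^{n-1} w^n/n - c w x} dw satisfies the Scorer-type equation f^{(n-1)}(x) + c·x·f(x) = 1 for every x ∈ ℂ. -/
open MeasureTheory Real Set

open Filter Topology ProbabilityTheory

/-!
With `a = (-c)^(n-1)`, the function `f` is `x ↦ M (-c x)`, where `M` is the complex moment
generating function of the measure with density `e^{-a w^n / n}` on the half-line. Moments give the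
derivatives of `M`, and integrating `d/dw e^{-a w^n / n + s w}` over `(0, ∞)` gives
`a M^{(n-1)}(s) - s M(s) = 1`. At `s = -c x` the factor `a` is the one that the chain rule produces
in `f^{(n-1)}(x) = (-c)^(n-1) M^{(n-1)}(-c x)`.
-/

/-- The unnormalised Gibbs measure on the half-line `(0, ∞)` with potential `φ`, whose complex
moment generating function is the Laplace transform `s ↦ ∫₀^∞ e^{-φ w + s w} dw`. -/
noncomputable def halfLineGibbs (φ : ℝ → ℝ) : Measure ℝ :=
  (volume.restrict (Ioi 0)).withDensity fun w ↦ ENNReal.ofReal (rexp (-φ w))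

namespace halfLineGibbs

variable {φ φ' : ℝ → ℝ} {E : Type*} [NormedAddCommGroup E] [NormedSpace ℝ E]

theorem integrable_iff (hφ : Measurable φ) {g : ℝ → E} :
    Integrable g (halfLineGibbs φ) ↔ IntegrableOn (fun w ↦ rexp (-φ w) • g w) (Ioi 0) := by
  rw [halfLineGibbs, integrable_withDensity_iff_integrable_smul' (by fun_prop) (by simp)]
  simp only [ENNReal.toReal_ofReal (exp_nonneg _), IntegrableOn]

theorem integral_eq (hφ : Measurable φ) (g : ℝ → E) :
    ∫ w, g w ∂halfLineGibbs φ = ∫ w in Ioi 0, rexp (-φ w) • g w := by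
  rw [halfLineGibbs, integral_withDensity_eq_integral_toReal_smul (by fun_prop) (by simp)]
  simp only [ENNReal.toReal_ofReal (exp_nonneg _)]

theorem integrableExpSet_id (hφ : Continuous φ)
    (hsuper : ∀ t : ℝ, Tendsto (fun w ↦ φ w - t * w) atTop atTop) :
    integrableExpSet id (halfLineGibbs φ) = univ := by
  refine eq_univ_of_forall fun t ↦ (integrable_iff hφ.measurable).2 ?_
  simp only [id, smul_eq_mul, ← Real.exp_add]
  refine integrable_of_isBigO_exp_neg one_pos (by fun_prop) (Asymptotics.IsLittleO.isBigO ?_)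
  rw [isLittleO_exp_comp_exp_comp]
  exact (hsuper (t + 1)).congr fun w ↦ by ring

theorem integral_sub_mul_cexp (hφ : Continuous φ)
    (hsuper : ∀ t : ℝ, Tendsto (fun w ↦ φ w - t * w) atTop atTop)
    (hderiv : ∀ w ∈ Ioi 0, HasDerivAt φ (φ' w) w) {s : ℂ}
    (hint : Integrable (fun w : ℝ ↦ (φ' w - s) * Complex.exp (s * w)) (halfLineGibbs φ)) :
    ∫ w : ℝ, (φ' w - s) * Complex.exp (s * w) ∂halfLineGibbs φ = rexp (-φ 0) := by
  have hprimitive (w : ℝ) (hw : w ∈ Ioi 0) :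
      HasDerivAt (fun w : ℝ ↦ -Complex.exp (-φ w + s * w))
        (rexp (-φ w) • ((φ' w - s) * Complex.exp (s * w))) w := by
    have hexponent : HasDerivAt (fun w : ℝ ↦ (-φ w + s * w : ℂ)) (-φ' w + s) w := by
      simpa using! (hderiv w hw).ofReal_comp.neg.add ((hasDerivAt_id w).ofReal_comp.const_mul s)
    refine hexponent.cexp.neg.congr_deriv ?_
    rw [Complex.exp_add, Complex.real_smul]
    push_cast
    ring
  have hvanish : Tendsto (fun w : ℝ ↦ -Complex.exp (-φ w + s * w)) atTop (𝓝 0) := by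
    rw [tendsto_zero_iff_norm_tendsto_zero]
    refine (tendsto_exp_neg_atTop_nhds_zero.comp (hsuper s.re)).congr fun w ↦ ?_
    simp [Complex.norm_exp, neg_add_eq_sub]
  rw [integral_eq hφ.measurable, integral_Ioi_of_hasDerivAt_of_tendsto
    (Continuous.continuousWithinAt (by fun_prop)) hprimitive
    ((integrable_iff hφ.measurable).1 hint) hvanish]
  simp

end halfLineGibbs

/-- The half-line Gibbs measure with potential `w ↦ a w ^ n / n`, scaled by `1 / n` so that its
derivative is `a w ^ (n - 1)`. -/
noncomputable abbrev powerGibbs (a : ℝ) (n : ℕ) : Measure ℝ :=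
  halfLineGibbs fun w ↦ a * w ^ n / n

section PowerPotential

variable {a : ℝ} {n : ℕ}

theorem tendsto_mul_pow_div_sub_mul_atTop (ha : 0 < a) (hn : 2 ≤ n) (t : ℝ) :
    Tendsto (fun w : ℝ ↦ a * w ^ n / n - t * w) atTop atTop := by
  obtain ⟨m, rfl⟩ := Nat.exists_eq_add_of_le' hn
  have hslope : Tendsto (fun w : ℝ ↦ a / (m + 2 : ℕ) * w ^ (m + 1) - t) atTop atTop :=
    tendsto_atTop_add_const_right _ _
      ((tendsto_pow_atTop m.succ_ne_zero).const_mul_atTop (by positivity))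
  exact (tendsto_id.atTop_mul_atTop₀ hslope).congr fun w ↦ by simp only [id]; ring

theorem mem_interior_integrableExpSet_powerGibbs (ha : 0 < a) (hn : 2 ≤ n) (t : ℝ) :
    t ∈ interior (integrableExpSet id (powerGibbs a n)) := by
  simp [halfLineGibbs.integrableExpSet_id (by fun_prop) (tendsto_mul_pow_div_sub_mul_atTop ha hn)]

theorem contDiff_complexMGF_powerGibbs (ha : 0 < a) (hn : 2 ≤ n) {k : WithTop ℕ∞} :
    ContDiff ℂ k (complexMGF id (powerGibbs a n)) :=
  contDiff_iff_contDiffAt.2 fun z ↦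
    (analyticAt_complexMGF (mem_interior_integrableExpSet_powerGibbs ha hn z.re)).contDiffAt

theorem complexMGF_powerGibbs (s : ℂ) :
    complexMGF id (powerGibbs a n) s =
      ∫ w in Ioi (0 : ℝ), Complex.exp (-a * (w : ℂ) ^ n / n + s * w) := by
  rw [complexMGF, halfLineGibbs.integral_eq (by fun_prop)]
  congr 1 with w
  rw [Complex.real_smul, Complex.ofReal_exp, ← Complex.exp_add]
  push_cast
  simp only [id, neg_mul, neg_div]

theorem iteratedDeriv_complexMGF_powerGibbs_sub (ha : 0 < a) (hn : 2 ≤ n) (s : ℂ) :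
    a * iteratedDeriv (n - 1) (complexMGF id (powerGibbs a n)) s -
      s * complexMGF id (powerGibbs a n) s = 1 := by
  have hn0 : n ≠ 0 := by lia
  have hs := mem_interior_integrableExpSet_powerGibbs ha hn s.re
  have hmoment := (integrable_pow_mul_cexp_of_re_mem_interior_integrableExpSet hs (n - 1)).const_mul
    (a : ℂ)
  have hmass := (integrable_cexp_mul_of_re_mem_interior_integrableExpSet hs).const_mul s
  have hderiv (w : ℝ) : HasDerivAt (fun w : ℝ ↦ a * w ^ n / n) (a * w ^ (n - 1)) w := by
    refine (((hasDerivAt_pow n w).const_mul a).div_const (n : ℝ)).congr_deriv ?_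
    field_simp
  have hsplit (w : ℝ) : ((a * w ^ (n - 1) : ℝ) - s) * Complex.exp (s * w) =
      a * ((w : ℂ) ^ (n - 1) * Complex.exp (s * w)) - s * Complex.exp (s * w) := by
    push_cast
    ring
  have hparts := halfLineGibbs.integral_sub_mul_cexp (by fun_prop)
    (tendsto_mul_pow_div_sub_mul_atTop ha hn) (fun w _ ↦ hderiv w) (s := s)
    (by simpa only [hsplit] using! hmoment.sub hmass)
  simp only [hsplit] at hparts
  rw [iteratedDeriv_complexMGF hs, complexMGF, ← integral_const_mul, ← integral_const_mul,
    ← integral_sub hmoment hmass]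
  simpa [hn0] using hparts

end PowerPotential

theorem scorer_type_equation_f
    (n : ℕ) (hn : 2 ≤ n) (c : ℝ) (hc : c ≠ 0)
    (hcase : Odd n ∨ (Even n ∧ c < 0))
    (f : ℂ → ℂ)
    (hf : ∀ x : ℂ, f x =
      ∫ w in Ioi (0 : ℝ),
        Complex.exp (-(-(c : ℂ)) ^ (n - 1) * (w : ℂ) ^ n / n - (c : ℂ) * w * x)) :
    ∀ x : ℂ, iteratedDeriv (n - 1) f x + (c : ℂ) * x * f x = 1 := by
  have ha : 0 < (-c) ^ (n - 1) := by
    rcases hcase with hodd | ⟨-, hneg⟩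
    · exact (Nat.Odd.sub_odd hodd odd_one).pow_pos (neg_ne_zero.2 hc)
    · exact pow_pos (neg_pos.2 hneg) _
  have hf_mgf :
      f = fun x ↦ complexMGF id (powerGibbs ((-c) ^ (n - 1)) n) (-c * x) := by
    ext x
    rw [hf, complexMGF_powerGibbs]
    congr 1 with w
    push_cast
    ring_nf
  intro x
  have hode := iteratedDeriv_complexMGF_powerGibbs_sub ha hn (-c * x)
  rw [hf_mgf, iteratedDeriv_comp_const_mul (contDiff_complexMGF_powerGibbs ha hn)]
  push_cast at hode
  linear_combination hode
end

section
/- Let m ≥ 1 be an integer and a a nonzero real number. Define u(t, x) = (1/π)·lim_{R→∞} ∫₀^R cos(x w + a t w^{2m+1}) dw for t > 0 and x ∈ ℝ. Then for every t > 0 and x ∈ ℝ, u satisfies the odd-order heat-type equation ∂u/∂t (t, x) = (-1)^m · a · ∂^{2m+1}u/∂x^{2m+1} (t, x). -/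
open MeasureTheory Real Set Filter Topology

/-!
For `c > 0`, turning the half-line onto the ray through `ζ = exp (π i / (2 n))`, where `ζ ^ n = i`,
makes the conditionally convergent integral `∫₀^∞ exp (i (x w + c w ^ n)) dw` absolutely
convergent: up to the factor `ζ`, its integrand becomes `exp (i ζ x r - c r ^ n)`. It can then be
differentiated under the integral sign, where `∂_c` brings down `i w ^ n` and `∂_x ^ n` brings down
`i ^ n w ^ n`. For `n = 2 m + 1` the quotient of the two is the real number `(-1) ^ m`, so the
relation passes to real parts. The case `a < 0` is the case `a > 0` reflected in `x`.
-/

open scoped ContDiff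

section ExpPowMoment

lemma tendsto_const_mul_pow_sub_atTop {n : ℕ} (hn : n ≠ 0) {c : ℝ} (hc : 0 < c) (B : ℝ) :
    Tendsto (fun r : ℝ => c * r ^ n - B) atTop atTop :=
  tendsto_atTop_add_const_right _ (-B) ((tendsto_pow_atTop hn).const_mul_atTop hc)

lemma isBigO_exp_mul_sub_mul_pow {n : ℕ} (hn : 2 ≤ n) {c : ℝ} (hc : 0 < c) (B D : ℝ) :
    (fun r : ℝ => Real.exp (B * r - c * r ^ n)) =O[atTop] fun r => Real.exp (D * r) := by
  refine isBigO_exp_comp_exp_comp.2 (isBoundedUnder_of_eventually_le (a := 0) ?_)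
  have hgrowth := tendsto_const_mul_pow_sub_atTop (n := n - 1) (by omega) hc (B - D)
  filter_upwards [hgrowth.eventually_ge_atTop 0, eventually_ge_atTop 0] with r hK hr
  calc B * r - c * r ^ n - D * r = -(r * (c * r ^ (n - 1) - (B - D))) := by
        rw [← pow_sub_one_mul (by omega : n ≠ 0) r]
        ring
    _ ≤ 0 := neg_nonpos.2 (mul_nonneg hr hK)

lemma integrableOn_pow_mul_exp_sub_pow {n : ℕ} (hn : 2 ≤ n) (k : ℕ) {c : ℝ} (hc : 0 < c)
    (B : ℝ) :
    IntegrableOn (fun r : ℝ => r ^ k * Real.exp (B * r - c * r ^ n)) (Ioi 0) := by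
  refine integrable_of_isBigO_exp_neg one_pos (by fun_prop) ?_
  refine (isLittleO_pow_exp_atTop.isBigO.mul (isBigO_exp_mul_sub_mul_pow hn hc B (-2))).congr_right
    fun r => ?_
  rw [← Real.exp_add]
  ring_nf

/-- The moments `∫₀^∞ r ^ k * exp (z r - c r ^ n) dr`, which converge for `n ≥ 2` and
`0 < c.re`; they are the derivatives in `z` of the moment with `k = 0`. -/
noncomputable def expPowMoment (n k : ℕ) (c z : ℂ) : ℂ :=
  ∫ r in Ioi (0 : ℝ), (r : ℂ) ^ k * Complex.exp (z * r - c * (r : ℂ) ^ n)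

lemma norm_pow_mul_cexp_sub_pow_le (n k : ℕ) {d B r : ℝ} {c z : ℂ} (hd : d ≤ c.re)
    (hz : ‖z‖ ≤ B) (hr : 0 ≤ r) :
    ‖(r : ℂ) ^ k * Complex.exp (z * r - c * (r : ℂ) ^ n)‖
      ≤ r ^ k * Real.exp (B * r - d * r ^ n) := by
  have hre : (z * r - c * (r : ℂ) ^ n).re = z.re * r - c.re * r ^ n := by
    rw [← Complex.ofReal_pow, Complex.sub_re, Complex.re_mul_ofReal, Complex.re_mul_ofReal]
  have hzB : z.re ≤ B := (Complex.re_le_norm z).trans hz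
  rw [norm_mul, norm_pow, Complex.norm_real, Real.norm_of_nonneg hr, Complex.norm_exp, hre]
  gcongr

lemma integrableOn_pow_mul_cexp_sub_pow {n : ℕ} (hn : 2 ≤ n) (k : ℕ) {c : ℂ} (hc : 0 < c.re)
    (z : ℂ) :
    IntegrableOn (fun r : ℝ => (r : ℂ) ^ k * Complex.exp (z * r - c * (r : ℂ) ^ n)) (Ioi 0) := by
  refine Integrable.mono' (integrableOn_pow_mul_exp_sub_pow hn k hc ‖z‖)
    (Continuous.aestronglyMeasurable (by fun_prop)) ?_
  filter_upwards [ae_restrict_mem measurableSet_Ioi] with r hr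
  exact norm_pow_mul_cexp_sub_pow_le n k le_rfl le_rfl (le_of_lt hr)

lemma hasDerivAt_expPowMoment {n : ℕ} (hn : 2 ≤ n) (k : ℕ) {c : ℂ} (hc : 0 < c.re) (z : ℂ) :
    HasDerivAt (expPowMoment n k c) (expPowMoment n (k + 1) c z) z := by
  refine (hasDerivAt_integral_of_dominated_loc_of_deriv_le (μ := volume.restrict (Ioi 0))
    (F := fun (z : ℂ) (r : ℝ) => (r : ℂ) ^ k * Complex.exp (z * r - c * (r : ℂ) ^ n))
    (F' := fun (z : ℂ) (r : ℝ) => (r : ℂ) ^ (k + 1) * Complex.exp (z * r - c * (r : ℂ) ^ n))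
    (bound := fun r : ℝ => r ^ (k + 1) * Real.exp ((‖z‖ + 1) * r - c.re * r ^ n))
    (Metric.ball_mem_nhds z one_pos) ?_ (integrableOn_pow_mul_cexp_sub_pow hn k hc z) ?_ ?_
    (integrableOn_pow_mul_exp_sub_pow hn (k + 1) hc _) ?_).2
  · exact Eventually.of_forall fun w => Continuous.aestronglyMeasurable (by fun_prop)
  · exact Continuous.aestronglyMeasurable (by fun_prop)
  · filter_upwards [ae_restrict_mem measurableSet_Ioi] with r hr w hw
    exact norm_pow_mul_cexp_sub_pow_le n (k + 1) le_rfl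
      (norm_lt_of_mem_ball hw).le (le_of_lt hr)
  · refine Eventually.of_forall fun r w _ => ?_
    have hexp := (((hasDerivAt_id' w).mul_const (r : ℂ)).sub_const (c * (r : ℂ) ^ n)).cexp
    refine (hexp.const_mul ((r : ℂ) ^ k)).congr_deriv ?_
    ring

lemma hasDerivAt_expPowMoment_coeff {n : ℕ} (hn : 2 ≤ n) (k : ℕ) {c : ℂ} (hc : 0 < c.re)
    (z : ℂ) :
    HasDerivAt (fun c => expPowMoment n k c z) (-expPowMoment n (k + n) c z) c := by
  have hnhds : {w : ℂ | c.re / 2 < w.re} ∈ 𝓝 c :=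
    (isOpen_lt continuous_const Complex.continuous_re).mem_nhds (half_lt_self hc)
  have hderiv := (hasDerivAt_integral_of_dominated_loc_of_deriv_le (μ := volume.restrict (Ioi 0))
    (F := fun (c : ℂ) (r : ℝ) => (r : ℂ) ^ k * Complex.exp (z * r - c * (r : ℂ) ^ n))
    (F' := fun (c : ℂ) (r : ℝ) => -((r : ℂ) ^ (k + n) * Complex.exp (z * r - c * (r : ℂ) ^ n)))
    (bound := fun r : ℝ => r ^ (k + n) * Real.exp (‖z‖ * r - c.re / 2 * r ^ n))
    hnhds ?_ (integrableOn_pow_mul_cexp_sub_pow hn k hc z) ?_ ?_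
    (integrableOn_pow_mul_exp_sub_pow hn (k + n) (half_pos hc) _) ?_).2
  · rwa [integral_neg] at hderiv
  · exact Eventually.of_forall fun w => Continuous.aestronglyMeasurable (by fun_prop)
  · exact Continuous.aestronglyMeasurable (by fun_prop)
  · filter_upwards [ae_restrict_mem measurableSet_Ioi] with r hr w hw
    rw [norm_neg]
    exact norm_pow_mul_cexp_sub_pow_le n (k + n) (le_of_lt hw) le_rfl (le_of_lt hr)
  · refine Eventually.of_forall fun r w _ => ?_
    have hexp := (((hasDerivAt_id' w).mul_const ((r : ℂ) ^ n)).const_sub (z * r)).cexp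
    refine (hexp.const_mul ((r : ℂ) ^ k)).congr_deriv ?_
    ring

end ExpPowMoment

section SectorContour

lemma integral_comp_mul_deriv_of_hasDerivAt {F f : ℂ → ℂ} (hF : ∀ z, HasDerivAt F (f z) z)
    (hf : Continuous f) {γ γ' : ℝ → ℂ} (hγ : ∀ t, HasDerivAt γ (γ' t) t) (hγ' : Continuous γ')
    (a b : ℝ) : ∫ t in a..b, f (γ t) * γ' t = F (γ b) - F (γ a) := by
  have hγc : Continuous γ := continuous_iff_continuousAt.2 fun t => (hγ t).continuousAt
  exact intervalIntegral.integral_eq_sub_of_hasDerivAt (f := F ∘ γ)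
    (fun t _ => (hF (γ t)).comp t (hγ t))
    (((hf.comp hγc).mul hγ').intervalIntegrable a b)

lemma integral_add_integral_arc_eq_integral_ray {f : ℂ → ℂ} (hf : Differentiable ℂ f)
    (R α : ℝ) :
    (∫ r in (0 : ℝ)..R, f r)
        + ∫ θ in (0 : ℝ)..α, f (circleMap 0 R θ) * (circleMap 0 R θ * Complex.I)
      = ∫ r in (0 : ℝ)..R, f (r * Complex.exp (α * Complex.I)) * Complex.exp (α * Complex.I) := by
  obtain ⟨F, hF⟩ := hf.isExactOn_univ
  have integral_path {γ γ' : ℝ → ℂ} (hγ : ∀ t, HasDerivAt γ (γ' t) t) (hγ' : Continuous γ')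
      (b : ℝ) : ∫ t in (0 : ℝ)..b, f (γ t) * γ' t = F (γ b) - F (γ 0) :=
    integral_comp_mul_deriv_of_hasDerivAt (fun z => hF z (mem_univ z)) hf.continuous hγ hγ' 0 b
  have hreal := integral_path (fun r => Complex.ofRealCLM.hasDerivAt (x := r)) continuous_const R
  have harc := integral_path (hasDerivAt_circleMap 0 R) (by fun_prop) α
  have hray := integral_path
    (fun r => (Complex.ofRealCLM.hasDerivAt (x := r)).mul_const (Complex.exp (α * Complex.I)))
    continuous_const R
  simp only [Complex.ofRealCLM_apply, Complex.ofReal_one, mul_one, one_mul, Complex.ofReal_zero,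
    zero_mul, circleMap_zero, Complex.exp_zero] at hreal harc hray ⊢
  rw [hreal, harc, hray]
  ring

end SectorContour

section ArcEstimate

lemma integral_exp_neg_mul_le_inv {K : ℝ} (hK : 0 < K) (α : ℝ) :
    ∫ θ in (0 : ℝ)..α, Real.exp (-K * θ) ≤ K⁻¹ := by
  rw [intervalIntegral.integral_comp_mul_left _ (neg_ne_zero.2 hK.ne'), integral_exp, mul_zero,
    Real.exp_zero, smul_eq_mul, inv_neg, neg_mul, ← mul_neg, neg_sub]
  exact mul_le_of_le_one_right (by positivity) (sub_le_self _ (Real.exp_nonneg _))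

lemma le_sin_mul {k θ : ℝ} (hk : π / 2 ≤ k) (hθ : 0 ≤ θ) (hkθ : k * θ ≤ π / 2) :
    θ ≤ Real.sin (k * θ) := by
  have hk0 : 0 ≤ k := by linarith [Real.pi_pos]
  calc θ = 2 / π * (π / 2 * θ) := by field_simp
    _ ≤ 2 / π * (k * θ) := by gcongr
    _ ≤ Real.sin (k * θ) := Real.mul_le_sin (by positivity) hkθ

/-- The entire function `w ↦ exp (i (x w + c w ^ n))`, whose real part on the real axis is the
integrand `cos (x w + c w ^ n)`. -/
noncomputable def oscillatoryExp (n : ℕ) (c x : ℝ) (w : ℂ) : ℂ :=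
  Complex.exp (Complex.I * (x * w + c * w ^ n))

lemma differentiable_oscillatoryExp (n : ℕ) (c x : ℝ) :
    Differentiable ℂ (oscillatoryExp n c x) := by
  unfold oscillatoryExp
  fun_prop

lemma norm_oscillatoryExp_circleMap (n : ℕ) (c x R θ : ℝ) :
    ‖oscillatoryExp n c x (circleMap 0 R θ)‖
      = Real.exp (-(x * (R * Real.sin θ) + c * (R ^ n * Real.sin (n * θ)))) := by
  have hpow : circleMap 0 R θ ^ n = circleMap 0 (R ^ n) (n * θ) := by
    simp only [circleMap_zero, mul_pow, ← Complex.exp_nat_mul]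
    push_cast
    ring_nf
  rw [oscillatoryExp, Complex.norm_exp, hpow, Complex.I_mul_re, Complex.add_im,
    Complex.im_ofReal_mul, Complex.im_ofReal_mul, circleMap_zero, circleMap_zero,
    Complex.im_ofReal_mul, Complex.im_ofReal_mul, Complex.exp_ofReal_mul_I_im,
    Complex.exp_ofReal_mul_I_im]

lemma norm_oscillatoryExp_circleMap_le {n : ℕ} (hn : 2 ≤ n) {c R θ : ℝ} (hc : 0 ≤ c)
    (hR : 0 ≤ R) (x : ℝ) (hθ : 0 ≤ θ) (hθ' : n * θ ≤ π / 2) :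
    ‖oscillatoryExp n c x (circleMap 0 R θ)‖ ≤ Real.exp (-(c * R ^ n - |x| * R) * θ) := by
  have hn' : π / 2 ≤ n := by
    have : (2 : ℝ) ≤ n := by exact_mod_cast hn
    linarith [Real.pi_le_four]
  have hlinear : -(x * (R * Real.sin θ)) ≤ |x| * (R * θ) :=
    calc -(x * (R * Real.sin θ)) ≤ |x * (R * Real.sin θ)| := neg_le_abs _
      _ = |x| * (R * |Real.sin θ|) := by rw [abs_mul, abs_mul, abs_of_nonneg hR]
      _ ≤ |x| * (R * θ) := by
        gcongr
        exact Real.abs_sin_le_abs.trans_eq (abs_of_nonneg hθ)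
  have hpower : c * (R ^ n * θ) ≤ c * (R ^ n * Real.sin (n * θ)) := by
    gcongr
    exact le_sin_mul hn' hθ hθ'
  rw [norm_oscillatoryExp_circleMap]
  apply Real.exp_le_exp.2
  linarith

lemma norm_integral_arc_oscillatoryExp_le {n : ℕ} (hn : 2 ≤ n) {c x R α : ℝ} (hc : 0 ≤ c)
    (hR : 0 ≤ R) (hα : 0 ≤ α) (hα' : n * α ≤ π / 2) (hK : 0 < c * R ^ n - |x| * R) :
    ‖∫ θ in (0 : ℝ)..α,
        oscillatoryExp n c x (circleMap 0 R θ) * (circleMap 0 R θ * Complex.I)‖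
      ≤ R * (c * R ^ n - |x| * R)⁻¹ := by
  have hbound : ∀ θ ∈ Ioc 0 α,
      ‖oscillatoryExp n c x (circleMap 0 R θ) * (circleMap 0 R θ * Complex.I)‖
        ≤ R * Real.exp (-(c * R ^ n - |x| * R) * θ) := by
    intro θ hθ
    have hnθ : n * θ ≤ π / 2 := le_trans (by gcongr; exact hθ.2) hα'
    rw [norm_mul, norm_mul, norm_circleMap_zero, Complex.norm_I, mul_one, abs_of_nonneg hR,
      mul_comm]
    gcongr
    exact norm_oscillatoryExp_circleMap_le hn hc hR x hθ.1.le hnθ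
  calc _ ≤ ∫ θ in (0 : ℝ)..α, R * Real.exp (-(c * R ^ n - |x| * R) * θ) :=
        intervalIntegral.norm_integral_le_of_norm_le hα (Eventually.of_forall hbound)
          (Continuous.intervalIntegrable (by fun_prop) _ _)
    _ ≤ R * (c * R ^ n - |x| * R)⁻¹ := by
        rw [intervalIntegral.integral_const_mul]
        gcongr
        exact integral_exp_neg_mul_le_inv hK α

lemma tendsto_integral_arc_oscillatoryExp {n : ℕ} (hn : 2 ≤ n) {c α : ℝ} (hc : 0 < c) (x : ℝ)
    (hα : 0 ≤ α) (hα' : n * α ≤ π / 2) :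
    Tendsto (fun R : ℝ => ∫ θ in (0 : ℝ)..α,
      oscillatoryExp n c x (circleMap 0 R θ) * (circleMap 0 R θ * Complex.I)) atTop (𝓝 0) := by
  have hgrowth := tendsto_const_mul_pow_sub_atTop (n := n - 1) (by omega) hc |x|
  refine squeeze_zero_norm' ?_ hgrowth.inv_tendsto_atTop
  filter_upwards [hgrowth.eventually_gt_atTop 0, eventually_gt_atTop 0] with R hK hR
  have hfactor : c * R ^ n - |x| * R = R * (c * R ^ (n - 1) - |x|) := by
    rw [← pow_sub_one_mul (by omega : n ≠ 0) R]
    ring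
  refine (norm_integral_arc_oscillatoryExp_le hn hc.le hR.le hα hα'
    (hfactor ▸ mul_pos hR hK)).trans_eq ?_
  rw [hfactor, mul_inv, mul_inv_cancel_left₀ hR.ne', Pi.inv_apply]

end ArcEstimate

section OscillatoryMoment

/-- The principal `n`-th root of `i`, that is `exp (π i / (2 n))`: the direction of the ray on which
`exp (i c w ^ n)` decays like `exp (-c r ^ n)`. -/
noncomputable def rootOfI (n : ℕ) : ℂ :=
  Complex.exp ((π / (2 * n) : ℝ) * Complex.I)

lemma rootOfI_pow {n : ℕ} (hn : n ≠ 0) : rootOfI n ^ n = Complex.I := by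
  have hn' : (n : ℂ) ≠ 0 := Nat.cast_ne_zero.2 hn
  have harg : (n : ℂ) * ((π / (2 * n) : ℝ) * Complex.I) = π / 2 * Complex.I := by
    push_cast
    field_simp
  rw [rootOfI, ← Complex.exp_nat_mul, harg, Complex.exp_pi_div_two_mul_I]

lemma oscillatoryExp_mul_rootOfI {n : ℕ} (hn : n ≠ 0) (c x r : ℝ) :
    oscillatoryExp n c x (r * rootOfI n)
      = Complex.exp (Complex.I * rootOfI n * x * r - c * (r : ℂ) ^ n) := by
  rw [oscillatoryExp, mul_pow, rootOfI_pow hn]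
  congr 1
  linear_combination (c * (r : ℂ) ^ n) * Complex.I_mul_I

/-- The moment `∫₀^∞ (i w) ^ k * exp (i (z w + c w ^ n)) dw` for `c > 0`, interpreted as the
absolutely convergent integral over the ray `w = r * rootOfI n`. -/
noncomputable def oscillatoryMoment (n k : ℕ) (c : ℝ) (z : ℂ) : ℂ :=
  Complex.I ^ k * rootOfI n ^ (k + 1) * expPowMoment n k c (Complex.I * rootOfI n * z)

variable {n : ℕ} {c : ℝ}

theorem tendsto_integral_oscillatoryExp (hn : 2 ≤ n) (hc : 0 < c) (x : ℝ) :
    Tendsto (fun R : ℝ => ∫ w in (0 : ℝ)..R, oscillatoryExp n c x w) atTop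
      (𝓝 (oscillatoryMoment n 0 c x)) := by
  have hn0 : n ≠ 0 := by omega
  have hangle : n * (π / (2 * n)) ≤ π / 2 := le_of_eq (by field_simp)
  have hray : Tendsto
      (fun R : ℝ => ∫ r in (0 : ℝ)..R, oscillatoryExp n c x (r * rootOfI n) * rootOfI n) atTop
      (𝓝 (oscillatoryMoment n 0 c x)) := by
    have hlim := (intervalIntegral_tendsto_integral_Ioi 0
      (integrableOn_pow_mul_cexp_sub_pow hn 0 (c := c) hc (Complex.I * rootOfI n * x))
      tendsto_id).const_mul (rootOfI n)
    simpa only [oscillatoryExp_mul_rootOfI hn0, oscillatoryMoment, expPowMoment, pow_zero, one_mul,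
      zero_add, pow_one, id, intervalIntegral.integral_mul_const, mul_comm (rootOfI n)] using hlim
  have harc := tendsto_integral_arc_oscillatoryExp hn hc x (by positivity) hangle
  refine (sub_zero (oscillatoryMoment n 0 c x) ▸ hray.sub harc).congr fun R => ?_
  exact sub_eq_of_eq_add
    (integral_add_integral_arc_eq_integral_ray (differentiable_oscillatoryExp n c x) R _).symm

theorem tendsto_integral_cos_phase (hn : 2 ≤ n) (hc : 0 < c) (x : ℝ) :
    Tendsto (fun R : ℝ => ∫ w in Ioc (0 : ℝ) R, Real.cos (x * w + c * w ^ n)) atTop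
      (𝓝 (oscillatoryMoment n 0 c x).re) := by
  refine ((Complex.continuous_re.tendsto _).comp
    (tendsto_integral_oscillatoryExp hn hc x)).congr' ?_
  filter_upwards [eventually_ge_atTop 0] with R hR
  have hcont : Continuous fun w : ℝ => oscillatoryExp n c x w :=
    (differentiable_oscillatoryExp n c x).continuous.comp Complex.continuous_ofReal
  have hre (w : ℝ) : (oscillatoryExp n c x w).re = Real.cos (x * w + c * w ^ n) := by
    rw [oscillatoryExp, ← Complex.exp_ofReal_mul_I_re, mul_comm Complex.I]
    push_cast
    rfl
  rw [← intervalIntegral.integral_of_le hR]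
  simp only [← hre]
  exact (intervalIntegral.intervalIntegral_re (hcont.intervalIntegrable 0 R)).symm

lemma hasDerivAt_oscillatoryMoment (hn : 2 ≤ n) (k : ℕ) (hc : 0 < c) (z : ℂ) :
    HasDerivAt (oscillatoryMoment n k c) (oscillatoryMoment n (k + 1) c z) z := by
  have hmoment := hasDerivAt_expPowMoment hn k (c := c) hc (Complex.I * rootOfI n * z)
  refine ((hmoment.comp z ((hasDerivAt_id' z).const_mul (Complex.I * rootOfI n))).const_mul
    (Complex.I ^ k * rootOfI n ^ (k + 1))).congr_deriv ?_
  rw [oscillatoryMoment]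
  ring

lemma hasDerivAt_oscillatoryMoment_coeff (hn : 2 ≤ n) (k : ℕ) (hc : 0 < c) (z : ℂ) :
    HasDerivAt (fun c => oscillatoryMoment n k c z)
      (Complex.I / Complex.I ^ n * oscillatoryMoment n (k + n) c z) c := by
  have hmoment := hasDerivAt_expPowMoment_coeff hn k (c := c) hc (Complex.I * rootOfI n * z)
  refine (hmoment.comp_ofReal.const_mul (Complex.I ^ k * rootOfI n ^ (k + 1))).congr_deriv ?_
  have hroot : rootOfI n ^ (k + n + 1) = rootOfI n ^ (k + 1) * Complex.I := by
    rw [add_right_comm, pow_add, rootOfI_pow (by omega)]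
  rw [oscillatoryMoment, hroot, pow_add]
  field_simp
  rw [Complex.I_sq]
  ring

lemma contDiff_re_oscillatoryMoment (hn : 2 ≤ n) (k : ℕ) (hc : 0 < c) :
    ContDiff ℝ ∞ fun x : ℝ => (oscillatoryMoment n k c x).re :=
  have hdiff : Differentiable ℂ (oscillatoryMoment n k c) := fun z =>
    (hasDerivAt_oscillatoryMoment hn k hc z).differentiableAt
  hdiff.contDiff.real_of_complex

lemma iteratedDeriv_re_oscillatoryMoment (hn : 2 ≤ n) (hc : 0 < c) (k : ℕ) :
    iteratedDeriv k (fun x : ℝ => (oscillatoryMoment n 0 c x).re)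
      = fun x : ℝ => (oscillatoryMoment n k c x).re := by
  induction k with
  | zero => rw [iteratedDeriv_zero]
  | succ k ih =>
    rw [iteratedDeriv_succ, ih]
    exact funext fun x => (hasDerivAt_oscillatoryMoment hn k hc x).real_of_complex.deriv

lemma I_div_I_pow_two_mul_add_one (m : ℕ) :
    Complex.I / Complex.I ^ (2 * m + 1) = ((-1 : ℝ) ^ m : ℝ) := by
  rw [pow_succ, pow_mul, Complex.I_sq, div_mul_cancel_right₀ Complex.I_ne_zero, ← inv_pow]
  push_cast
  norm_num

theorem hasDerivAt_re_oscillatoryMoment_coeff {m : ℕ} (hm : m ≠ 0) (hc : 0 < c) (x : ℝ) :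
    HasDerivAt (fun c => (oscillatoryMoment (2 * m + 1) 0 c x).re)
      ((-1) ^ m
        * iteratedDeriv (2 * m + 1) (fun z : ℝ => (oscillatoryMoment (2 * m + 1) 0 c z).re) x)
      c := by
  have hn : 2 ≤ 2 * m + 1 := by omega
  have hcoeff := hasDerivAt_oscillatoryMoment_coeff hn 0 hc x
  rw [zero_add, I_div_I_pow_two_mul_add_one] at hcoeff
  rw [iteratedDeriv_re_oscillatoryMoment hn hc, ← Complex.re_ofReal_mul]
  exact Complex.reCLM.hasFDerivAt.comp_hasDerivAt c hcoeff

end OscillatoryMoment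

section HeatTypeEquation

variable {m : ℕ} {a : ℝ} {u : ℝ → ℝ → ℝ}

lemma heat_type_equation_of_pos (hm : 1 ≤ m) (ha : 0 < a)
    (hu : ∀ t : ℝ, 0 < t → ∀ x : ℝ, Tendsto
      (fun R : ℝ => ∫ w in Ioc (0 : ℝ) R, Real.cos (x * w + a * t * w ^ (2 * m + 1)))
      atTop (𝓝 (π * u t x))) {t : ℝ} (ht : 0 < t) :
    ContDiff ℝ ∞ (u t) ∧ ∀ x : ℝ, HasDerivAt (fun s => u s x)
      ((-1) ^ m * a * iteratedDeriv (2 * m + 1) (u t) x) t := by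
  have hn : 2 ≤ 2 * m + 1 := by omega
  have hu_eq : ∀ s > 0, ∀ x, u s x = π⁻¹ * (oscillatoryMoment (2 * m + 1) 0 (a * s) x).re :=
    fun s hs x => (eq_inv_mul_iff_mul_eq₀ Real.pi_ne_zero).2 <|
      tendsto_nhds_unique (hu s hs x) (tendsto_integral_cos_phase hn (mul_pos ha hs) x)
  have hspace := funext (hu_eq t ht)
  have hsmooth := contDiff_re_oscillatoryMoment hn 0 (mul_pos ha ht)
  refine ⟨hspace ▸ contDiff_const.mul hsmooth, fun x => ?_⟩
  have hcoeff := hasDerivAt_re_oscillatoryMoment_coeff (m := m) (by omega) (mul_pos ha ht) x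
  have htime := (hcoeff.comp t ((hasDerivAt_id' t).const_mul a)).const_mul π⁻¹
  refine (htime.congr_of_eventuallyEq ?_).congr_deriv ?_
  · filter_upwards [Ioi_mem_nhds ht] with s hs using hu_eq s hs x
  · rw [hspace, iteratedDeriv_const_mul_field]
    ring

/-- Unlike an equation between values of `deriv` and `iteratedDeriv`, this asserts that the
derivatives exist. -/
theorem odd_order_heat_type_equation_general (hm : 1 ≤ m) (ha : a ≠ 0)
    (hu : ∀ t : ℝ, 0 < t → ∀ x : ℝ, Tendsto
      (fun R : ℝ => ∫ w in Ioc (0 : ℝ) R, Real.cos (x * w + a * t * w ^ (2 * m + 1)))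
      atTop (𝓝 (π * u t x))) {t : ℝ} (ht : 0 < t) :
    ContDiff ℝ ∞ (u t) ∧ ∀ x : ℝ, HasDerivAt (fun s => u s x)
      ((-1) ^ m * a * iteratedDeriv (2 * m + 1) (u t) x) t := by
  rcases ha.lt_or_gt with ha | ha
  · have hu_reflect : ∀ t : ℝ, 0 < t → ∀ x : ℝ, Tendsto
        (fun R : ℝ => ∫ w in Ioc (0 : ℝ) R, Real.cos (x * w + -a * t * w ^ (2 * m + 1)))
        atTop (𝓝 (π * u t (-x))) := by
      intro t ht x
      refine (hu t ht (-x)).congr fun R => integral_congr_ae (Eventually.of_forall fun w => ?_)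
      simp only [← Real.cos_neg (x * w + _)]
      ring_nf
    obtain ⟨hsmooth, htime⟩ :=
      heat_type_equation_of_pos (u := fun s x => u s (-x)) hm (neg_pos.2 ha) hu_reflect ht
    refine ⟨by simpa only [Function.comp_def, neg_neg] using hsmooth.comp contDiff_neg,
      fun x => ?_⟩
    have hodd : (-1 : ℝ) ^ (2 * m + 1) = -1 := Odd.neg_one_pow ⟨m, rfl⟩
    simpa only [iteratedDeriv_comp_neg, hodd, neg_neg, smul_eq_mul, neg_mul, mul_neg, one_mul]
      using htime (-x)
  · exact heat_type_equation_of_pos hm ha hu ht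

end HeatTypeEquation

theorem odd_order_heat_type_equation
    (m : ℕ) (hm : 1 ≤ m) (a : ℝ) (ha : a ≠ 0)
    (u : ℝ → ℝ → ℝ)
    (hu : ∀ t : ℝ, 0 < t → ∀ x : ℝ, Tendsto
      (fun R : ℝ => ∫ w in Ioc (0 : ℝ) R, Real.cos (x * w + a * t * w ^ (2 * m + 1)))
      atTop (𝓝 (π * u t x))) :
    ∀ t : ℝ, 0 < t → ∀ x : ℝ,
      deriv (fun s : ℝ => u s x) t
        = (-1 : ℝ) ^ m * a * iteratedDeriv (2 * m + 1) (fun z : ℝ => u t z) x :=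
  fun _ ht x => ((odd_order_heat_type_equation_general hm ha hu ht).2 x).deriv
end
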